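/- For all reals A₁ ≥ 0, A₂ ≥ 0 and ε > 0 there exist a smooth time-dependent function F : ℝ × ℂ → ℝ with F t z = 0 whenever π|z|² ≥ A₁ + A₂ + ε, and a Hamiltonian flow b : ℝ → ℂ → ℂ of F with b 0 = id, such that the image under the time-one map b 1 of the closed disc {z ∈ ℂ : π|z|² ≤ A₁} is disjoint from the closed disc {z ∈ ℂ : π|z|² ≤ A₂}. (In words: a disc of area A₁ can be disjoined from a disc of area A₂ by a Hamiltonian isotopy supported inside any disc of area greater than A₁ + A₂.) -/

import Mathlib

open Real

/-!
An increasing function `P` on the line gives the area-preserving map `(x, y) ↦ (P x, y / P' x)`,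
which straightens the band `|y| ≤ P' x` to a strip. Deforming `P` from `U` to `W` and keeping these
coordinates of every point fixed is a Hamiltonian motion, generated by `-y h(t, x)`, that carries
the band under `U'` into the band under `W'` in such a way that the value of `U` at the start is the
value of `W` at the end.

A disc is nearly the band under a half-chord function. Choose `W` for a disc of intermediate area,
`U` for the first disc with the value of `W` at its left end, and `V` for the second disc with the
value of `W` at its right end. Since the areas of the two discs sum to less than that of the
intermediate one, all values of `U` lie below all values of `V`. Carry the first disc along the
motion from `U` to `W`, then backwards along the motion from `V` to `W`: a point landing in the
second disc would have equal values of `U` and `V` at its two ends.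
-/

open Set Filter Function
open scoped Topology ContDiff NNReal Manifold

section ODE

variable {E : Type*} [NormedAddCommGroup E] [NormedSpace ℝ E]

theorem exists_isIntegralCurveOn_Icc_of_lipschitzWith [CompleteSpace E] {v : ℝ → E → E} {a b : ℝ}
    {K C : ℝ≥0} (hlip : ∀ t ∈ Icc a b, LipschitzWith K (v t))
    (hcont : ∀ x, ContinuousOn (v · x) (Icc a b)) (hbound : ∀ t ∈ Icc a b, ∀ x, ‖v t x‖ ≤ C)
    (t₀ : Icc a b) (x₀ : E) : ∃ γ : ℝ → E, γ t₀ = x₀ ∧ IsIntegralCurveOn γ v (Icc a b) := by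
  have hduration : 0 ≤ max (b - t₀) (t₀ - a) := le_max_of_le_left (sub_nonneg.2 t₀.2.2)
  have hv : IsPicardLindelof v t₀ x₀ (C * ⟨_, hduration⟩) 0 C K :=
    { lipschitzOnWith := fun t ht ↦ (hlip t ht).lipschitzOnWith
      continuousOn := fun x _ ↦ hcont x
      norm_le := fun t ht x _ ↦ hbound t ht x
      mul_max_le := by rw [NNReal.coe_zero, sub_zero]; exact le_rfl }
  exact hv.exists_eq_forall_mem_Icc_hasDerivWithinAt₀

theorem eq_left_of_forall_eventually_hasDerivWithinAt_zero {f : ℝ → E} {a b : ℝ}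
    (hf : ContinuousOn f (Icc a b))
    (hderiv : ∀ t ∈ Ico a b, f t = f a → ∀ᶠ s in 𝓝[Icc a b] t,
      HasDerivWithinAt f 0 (Icc a b) s) :
    ∀ t ∈ Icc a b, f t = f a := by
  refine IsClosed.Icc_subset_of_forall_mem_nhdsWithin (s := {t | f t = f a}) ?_ rfl ?_
  · rw [inter_comm]
    exact hf.preimage_isClosed_of_isClosed isClosed_Icc isClosed_singleton
  · rintro t ⟨hft, ht⟩
    have hright : ∀ᶠ s in 𝓝[≥] t, s < b ∧ HasDerivWithinAt f 0 (Icc a b) s := by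
      have hle : 𝓝[≥] t ≤ 𝓝[Icc a b] t := by
        rw [← nhdsWithin_Icc_eq_nhdsGE ht.2]
        exact nhdsWithin_mono t (Icc_subset_Icc_left ht.1)
      exact ((eventually_lt_nhds ht.2).filter_mono nhdsWithin_le_nhds).and
        ((hderiv t ht hft).filter_mono hle)
    obtain ⟨c, htc, hc⟩ := mem_nhdsGE_iff_exists_Icc_subset.1 hright
    filter_upwards [Icc_mem_nhdsGT htc] with s hs
    refine (constant_of_has_deriv_right_zero
      (fun x hx ↦ ?_) (fun x hx ↦ ?_) s hs).trans hft
    · exact (hc hx).2.continuousWithinAt.mono (Icc_subset_Icc ht.1 (hc ⟨htc.le, le_rfl⟩).1.le)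
    · obtain ⟨hxb, hx'⟩ := hc (Ico_subset_Icc_self hx)
      exact hx'.mono_of_mem_nhdsWithin
        (mem_of_superset (Icc_mem_nhdsGE hxb) (Icc_subset_Icc_left (ht.1.trans hx.1)))

theorem isIntegralCurve_concat {v w : ℝ → E → E} {γ δ : ℝ → E} {α β : ℝ → ℝ}
    (hγ : IsIntegralCurveOn γ v (Icc 0 1)) (hδ : IsIntegralCurveOn δ w (Icc 0 1))
    (hγδ : γ 1 = δ 1) (hα : Differentiable ℝ α) (hβ : Differentiable ℝ β)
    (hα01 : ∀ t, α t ∈ Icc 0 1) (hβ01 : ∀ t, β t ∈ Icc 0 1) (hαβ : ∀ t, α t = 1 ∨ β t = 1) :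
    IsIntegralCurve (fun t ↦ γ (α t) + δ (β t) - γ 1)
      (fun t x ↦ deriv α t • v (α t) x + deriv β t • w (β t) x) := by
  intro t
  -- At every time one of the two parameters is at its maximum, hence stationary.
  have deriv_eq_zero {f : ℝ → ℝ} (hf : ∀ s, f s ∈ Icc (0 : ℝ) 1) (hft : f t = 1) :
      deriv f t = 0 :=
    IsLocalMax.deriv_eq_zero (Eventually.of_forall fun s ↦ hft ▸ (hf s).2)
  have hderiv := (((hγ _ (hα01 t)).scomp_hasDerivAt t (hα t).hasDerivAt hα01).add
    ((hδ _ (hβ01 t)).scomp_hasDerivAt t (hβ t).hasDerivAt hβ01)).sub_const (γ 1)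
  refine hderiv.congr_deriv ?_
  rcases hαβ t with h | h
  · simp [deriv_eq_zero hα01 h, h]
  · simp [deriv_eq_zero hβ01 h, h, hγδ]

end ODE

section HamiltonianVectorField

/-- The Hamiltonian vector field `i ∇F_t` on `ℂ` of the time-dependent Hamiltonian `F`, in the
curried form expected by `IsIntegralCurve`. -/
noncomputable def hamiltonianVectorField (F : ℝ × ℂ → ℝ) (t : ℝ) (z : ℂ) : ℂ :=
  Complex.I * gradient (fun w ↦ F (t, w)) z

theorem gradient_eq_fderiv_one_fderiv_I (f : ℂ → ℝ) (z : ℂ) :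
    gradient f z = ⟨fderiv ℝ f z 1, fderiv ℝ f z Complex.I⟩ := by
  have hre : inner ℝ (gradient f z) 1 = fderiv ℝ f z 1 := inner_gradient_left
  have him : inner ℝ (gradient f z) Complex.I = fderiv ℝ f z Complex.I := inner_gradient_left
  rw [← hre, ← him, Complex.inner, Complex.inner]
  apply Complex.ext <;> simp

variable {F G : ℝ × ℂ → ℝ}

theorem contDiff_hamiltonianVectorField {m n : WithTop ℕ∞} (hF : ContDiff ℝ n F)
    (hmn : m + 1 ≤ n) : ContDiff ℝ m (uncurry (hamiltonianVectorField F)) := by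
  have hpartial (v : ℂ) :
      ContDiff ℝ m fun p : ℝ × ℂ ↦ fderiv ℝ (fun w ↦ F (p.1, w)) p.2 v :=
    ContDiff.fderiv_apply (f := fun (p : ℝ × ℂ) w ↦ F (p.1, w))
      (hF.comp (by fun_prop : ContDiff ℝ n fun q : (ℝ × ℂ) × ℂ ↦ (q.1.1, q.2)))
      contDiff_snd contDiff_const hmn
  have hcoord : uncurry (hamiltonianVectorField F) = fun p ↦ Complex.I *
      (Complex.ofRealCLM (fderiv ℝ (fun w ↦ F (p.1, w)) p.2 1) +
        Complex.ofRealCLM (fderiv ℝ (fun w ↦ F (p.1, w)) p.2 Complex.I) * Complex.I) := by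
    ext1 p
    simp [uncurry, hamiltonianVectorField, gradient_eq_fderiv_one_fderiv_I, Complex.mk_eq_add_mul_I]
  rw [hcoord]
  exact contDiff_const.mul ((Complex.ofRealCLM.contDiff.comp (hpartial 1)).add
    ((Complex.ofRealCLM.contDiff.comp (hpartial Complex.I)).mul contDiff_const))

theorem hasCompactSupport_hamiltonianVectorField (hF : HasCompactSupport F) :
    HasCompactSupport (uncurry (hamiltonianVectorField F)) := by
  refine hF.mono' fun ⟨t, z⟩ hz ↦ ?_
  contrapose! hz
  have hzero : (fun w ↦ F (t, w)) =ᶠ[𝓝 z] fun _ ↦ 0 :=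
    (Continuous.prodMk_right t).continuousAt.eventually (notMem_tsupport_iff_eventuallyEq.1 hz)
  simp [uncurry, hamiltonianVectorField, hzero.gradient_eq]

theorem exists_isIntegralCurveOn_hamiltonianVectorField (hF : ContDiff ℝ 2 F)
    (hFc : HasCompactSupport F) {a b : ℝ} (t₀ : Icc a b) (z : ℂ) :
    ∃ γ : ℝ → ℂ, γ t₀ = z ∧ IsIntegralCurveOn γ (hamiltonianVectorField F) (Icc a b) := by
  have hsmooth : ContDiff ℝ 1 (uncurry (hamiltonianVectorField F)) :=
    contDiff_hamiltonianVectorField hF (by norm_num)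
  have hcompact := hasCompactSupport_hamiltonianVectorField hFc
  obtain ⟨K, hK⟩ := ContDiff.lipschitzWith_of_hasCompactSupport hcompact hsmooth one_ne_zero
  obtain ⟨C, hC⟩ := hcompact.exists_bound_of_continuous hsmooth.continuous
  refine exists_isIntegralCurveOn_Icc_of_lipschitzWith (K := K) (C := C.toNNReal)
    (fun t _ ↦ ?_) (fun x ↦ ?_) (fun t _ x ↦ (hC (t, x)).trans (le_coe_toNNReal C)) t₀ z
  · simpa using! hK.comp (LipschitzWith.prodMk_left t)
  · exact (hsmooth.continuous.comp (Continuous.prodMk_left x)).continuousOn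

theorem hamiltonianVectorField_mul_add_mul (hF : Differentiable ℝ F) (hG : Differentiable ℝ G)
    (a b α β : ℝ → ℝ) (t : ℝ) (z : ℂ) :
    hamiltonianVectorField (fun p ↦ a p.1 * F (α p.1, p.2) + b p.1 * G (β p.1, p.2)) t z =
      a t • hamiltonianVectorField F (α t) z + b t • hamiltonianVectorField G (β t) z := by
  have hFt : DifferentiableAt ℝ (fun w ↦ F (α t, w)) z := by fun_prop
  have hGt : DifferentiableAt ℝ (fun w ↦ G (β t, w)) z := by fun_prop
  have hfderiv : fderiv ℝ (fun w ↦ a t * F (α t, w) + b t * G (β t, w)) z =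
      a t • fderiv ℝ (fun w ↦ F (α t, w)) z + b t • fderiv ℝ (fun w ↦ G (β t, w)) z :=
    ((hFt.hasFDerivAt.const_mul (a t)).add (hGt.hasFDerivAt.const_mul (b t))).fderiv
  simp only [hamiltonianVectorField, gradient, hfderiv, map_add, map_smulₛₗ, mul_add]
  simp [mul_left_comm]

end HamiltonianVectorField

section ConcatenatedFlow

/-- `b` is the Hamiltonian flow of the time-dependent Hamiltonian `F` on `ℂ`, defined for all
times. -/
structure IsHamiltonianFlow (F : ℝ × ℂ → ℝ) (b : ℝ → ℂ → ℂ) : Prop where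
  map_zero : b 0 = id
  isIntegralCurve : ∀ z, IsIntegralCurve (b · z) (hamiltonianVectorField F)

theorem exists_isHamiltonianFlow_concat_reverse {F G : ℝ × ℂ → ℝ}
    (hF : ContDiff ℝ ∞ F) (hG : ContDiff ℝ ∞ G)
    (hFc : HasCompactSupport F) (hGc : HasCompactSupport G) :
    ∃ (H : ℝ × ℂ → ℝ) (b : ℝ → ℂ → ℂ), ContDiff ℝ ∞ H ∧
      (∀ z, (∀ t, F (t, z) = 0) → (∀ t, G (t, z) = 0) → ∀ t, H (t, z) = 0) ∧
      IsHamiltonianFlow H b ∧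
      ∀ z, ∃ γ δ : ℝ → ℂ, IsIntegralCurveOn γ (hamiltonianVectorField F) (Icc 0 1) ∧
        IsIntegralCurveOn δ (hamiltonianVectorField G) (Icc 0 1) ∧
        γ 0 = z ∧ γ 1 = δ 1 ∧ δ 0 = b 1 z := by
  -- `α` runs through `F` during the first half, `β` backwards through `G` during the second.
  let α : ℝ → ℝ := fun t ↦ smoothTransition (2 * t)
  let β : ℝ → ℝ := fun t ↦ smoothTransition (2 - 2 * t)
  have hα : ContDiff ℝ ∞ α := smoothTransition.contDiff.comp (by fun_prop)
  have hβ : ContDiff ℝ ∞ β := smoothTransition.contDiff.comp (by fun_prop)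
  have hαβ (t : ℝ) : α t = 1 ∨ β t = 1 := by
    rcases le_total (1 / 2) t with ht | ht
    · exact .inl (smoothTransition.one_of_one_le (by linarith))
    · exact .inr (smoothTransition.one_of_one_le (by linarith))
  choose γ hγ₀ hγ using fun z ↦ exists_isIntegralCurveOn_hamiltonianVectorField
    (hF.of_le (by norm_cast)) hFc (⟨0, by simp⟩ : Icc (0 : ℝ) 1) z
  choose δ hδ₁ hδ using fun z ↦ exists_isIntegralCurveOn_hamiltonianVectorField
    (hG.of_le (by norm_cast)) hGc (⟨1, by simp⟩ : Icc (0 : ℝ) 1) (γ z 1)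
  refine ⟨fun p ↦ deriv α p.1 * F (α p.1, p.2) + deriv β p.1 * G (β p.1, p.2),
    fun t z ↦ γ z (α t) + δ z (β t) - γ z 1, ?_, fun z hFz hGz t ↦ by simp [hFz, hGz],
    ⟨?_, fun z ↦ ?_⟩, fun z ↦ ⟨γ z, δ z, hγ z, hδ z, hγ₀ z, (hδ₁ z).symm, ?_⟩⟩
  · have := (contDiff_infty_iff_deriv.1 hα).2
    have := (contDiff_infty_iff_deriv.1 hβ).2
    fun_prop
  · ext1 z
    simpa [α, β, smoothTransition.one_of_one_le, hδ₁ z] using hγ₀ z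
  · have hcurve := isIntegralCurve_concat (hγ z) (hδ z) (hδ₁ z).symm
      (hα.differentiable (by simp)) (hβ.differentiable (by simp))
      (fun t ↦ ⟨smoothTransition.nonneg _, smoothTransition.le_one _⟩)
      (fun t ↦ ⟨smoothTransition.nonneg _, smoothTransition.le_one _⟩) hαβ
    intro t
    rw [hamiltonianVectorField_mul_add_mul (hF.differentiable (by simp))
      (hG.differentiable (by simp))]
    exact hcurve t
  · simp [α, β, smoothTransition.one_of_one_le]

end ConcatenatedFlow

section SmoothInterpolation

variable {f g : ℝ → ℝ} {t x : ℝ}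

/-- The smooth homotopy from `f`, reached for `t ≤ 0`, to `g`, reached for `t ≥ 1`. -/
noncomputable def smoothInterp (f g : ℝ → ℝ) (t x : ℝ) : ℝ :=
  (1 - smoothTransition t) * f x + smoothTransition t * g x

theorem smoothInterp_zero (f g : ℝ → ℝ) : smoothInterp f g 0 = f := by
  ext; simp [smoothInterp]

theorem smoothInterp_one (f g : ℝ → ℝ) : smoothInterp f g 1 = g := by
  ext; simp [smoothInterp]

theorem smoothInterp_mem {s : Set ℝ} (hs : Convex ℝ s) (hf : f x ∈ s) (hg : g x ∈ s) (t : ℝ) :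
    smoothInterp f g t x ∈ s :=
  hs hf hg (sub_nonneg.2 (smoothTransition.le_one t)) (smoothTransition.nonneg t)
    (sub_add_cancel _ _)

theorem contDiff_smoothInterp {n : ℕ∞} (hf : ContDiff ℝ n f) (hg : ContDiff ℝ n g) :
    ContDiff ℝ n (uncurry (smoothInterp f g)) := by
  have : ContDiff ℝ n smoothTransition := smoothTransition.contDiff
  unfold smoothInterp uncurry
  fun_prop

theorem hasDerivAt_smoothInterp (hf : DifferentiableAt ℝ f x) (hg : DifferentiableAt ℝ g x) :
    HasDerivAt (smoothInterp f g t) (smoothInterp (deriv f) (deriv g) t x) x :=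
  (hf.hasDerivAt.const_mul _).add (hg.hasDerivAt.const_mul _)

theorem deriv_smoothInterp (hf : Differentiable ℝ f) (hg : Differentiable ℝ g) (t : ℝ) :
    deriv (smoothInterp f g t) = smoothInterp (deriv f) (deriv g) t :=
  funext fun x ↦ (hasDerivAt_smoothInterp (hf x) (hg x)).deriv

theorem hasDerivWithinAt_smoothInterp_comp {ξ : ℝ → ℝ} {ξ' : ℝ} {s : Set ℝ}
    (hf : DifferentiableAt ℝ f (ξ t)) (hg : DifferentiableAt ℝ g (ξ t))
    (hξ : HasDerivWithinAt ξ ξ' s t) :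
    HasDerivWithinAt (fun τ ↦ smoothInterp f g τ (ξ τ))
      (deriv smoothTransition t * (g (ξ t) - f (ξ t)) +
        smoothInterp (deriv f) (deriv g) t (ξ t) * ξ') s t := by
  have hσ : HasDerivWithinAt smoothTransition (deriv smoothTransition t) s t :=
    (smoothTransition.contDiffAt (n := 1).differentiableAt one_ne_zero).hasDerivAt.hasDerivWithinAt
  refine (((hσ.const_sub 1).mul (hf.hasDerivAt.comp_hasDerivWithinAt t hξ)).add
    (hσ.mul (hg.hasDerivAt.comp_hasDerivWithinAt t hξ))).congr_deriv ?_
  simp only [smoothInterp, comp_apply]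
  ring

end SmoothInterpolation

section AreaCoordinates

/-- The region of `ℂ` over the interval `[a, b]` lying between the graphs of `-f` and `f`. -/
def symmetricBand (a b : ℝ) (f : ℝ → ℝ) : Set ℂ := {z | z.re ∈ Icc a b ∧ |z.im| ≤ f z.re}

theorem isClosed_symmetricBand {a b : ℝ} {f : ℝ → ℝ} (hf : Continuous f) :
    IsClosed (symmetricBand a b f) :=
  (isClosed_Icc.preimage Complex.continuous_re).inter
    (isClosed_le Complex.continuous_im.abs (hf.comp Complex.continuous_re))

/-- The area-preserving change of coordinates `(x, y) ↦ (P x, y / P' x)`. It straightens the band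
`|y| ≤ P' x` to the strip of half-width one. -/
noncomputable def areaCoords (P : ℝ → ℝ) (z : ℂ) : ℝ × ℝ := (P z.re, z.im / deriv P z.re)

theorem mem_symmetricBand_deriv_iff {P : ℝ → ℝ} (hP : ∀ x, 0 < deriv P x) {a b : ℝ} {z : ℂ} :
    z ∈ symmetricBand a b (deriv P) ↔ areaCoords P z ∈ Icc (P a) (P b) ×ˢ Icc (-1) 1 := by
  have hmono : StrictMono P := strictMono_of_deriv_pos hP
  have him : |z.im / deriv P z.re| ≤ 1 ↔ |z.im| ≤ deriv P z.re := by
    rw [abs_div, abs_of_pos (hP z.re), div_le_one (hP z.re)]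
  simp only [symmetricBand, areaCoords, mem_ofPred_eq, mem_prod, mem_Icc, hmono.le_iff_le,
    ← abs_le, him]

end AreaCoordinates

section Transport

variable {U W : ℝ → ℝ}

theorem deriv_smoothTransition_eq_zero {t : ℝ} (ht : t ∉ Ioo 0 1) :
    deriv smoothTransition t = 0 := by
  rcases le_or_gt t 0 with h | h
  · refine IsLocalMin.deriv_eq_zero (Eventually.of_forall fun x ↦ ?_)
    rw [smoothTransition.zero_of_nonpos h]
    exact smoothTransition.nonneg x
  · refine IsLocalMax.deriv_eq_zero (Eventually.of_forall fun x ↦ ?_)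
    rw [smoothTransition.one_of_one_le (not_lt.1 fun h' ↦ ht ⟨h, h'⟩)]
    exact smoothTransition.le_one x

/-- The velocity field on the line whose trajectories keep `smoothInterp U W t` constant. -/
noncomputable def transportVelocity (U W : ℝ → ℝ) (t x : ℝ) : ℝ :=
  deriv smoothTransition t * (U x - W x) / smoothInterp (deriv U) (deriv W) t x

/-- The Hamiltonian `-y h(t, x)`, with `h` the transport velocity, cut off by `χ`. Where `χ = 1`,
its flow lifts the transport of the line to an area-preserving motion of the plane. -/
noncomputable def transportHamiltonian (χ : ℂ → ℝ) (U W : ℝ → ℝ) (p : ℝ × ℂ) : ℝ :=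
  χ p.2 * -(p.2.im * transportVelocity U W p.1 p.2.re)

theorem smoothInterp_deriv_pos (hU' : ∀ x, 0 < deriv U x) (hW' : ∀ x, 0 < deriv W x) (t x : ℝ) :
    0 < smoothInterp (deriv U) (deriv W) t x :=
  smoothInterp_mem (convex_Ioi 0) (hU' x) (hW' x) t

theorem contDiff_transportVelocity (hU : ContDiff ℝ ∞ U) (hW : ContDiff ℝ ∞ W)
    (hU' : ∀ x, 0 < deriv U x) (hW' : ∀ x, 0 < deriv W x) :
    ContDiff ℝ ∞ (uncurry (transportVelocity U W)) := by
  have : ContDiff ℝ ∞ (deriv smoothTransition) :=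
    (contDiff_infty_iff_deriv.1 smoothTransition.contDiff).2
  have hdenom : ContDiff ℝ ∞ (uncurry (smoothInterp (deriv U) (deriv W))) :=
    contDiff_smoothInterp (contDiff_infty_iff_deriv.1 hU).2 (contDiff_infty_iff_deriv.1 hW).2
  have hnum : ContDiff ℝ ∞ fun p : ℝ × ℝ ↦ deriv smoothTransition p.1 * (U p.2 - W p.2) := by
    fun_prop
  exact hnum.div hdenom fun p ↦ (smoothInterp_deriv_pos hU' hW' p.1 p.2).ne'

theorem contDiff_transportHamiltonian {χ : ℂ → ℝ} (hχ : ContDiff ℝ ∞ χ) (hU : ContDiff ℝ ∞ U)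
    (hW : ContDiff ℝ ∞ W) (hU' : ∀ x, 0 < deriv U x) (hW' : ∀ x, 0 < deriv W x) :
    ContDiff ℝ ∞ (transportHamiltonian χ U W) := by
  have hre : ContDiff ℝ ∞ Complex.re := Complex.reCLM.contDiff
  have him : ContDiff ℝ ∞ Complex.im := Complex.imCLM.contDiff
  have hvel : ContDiff ℝ ∞ fun p : ℝ × ℂ ↦ transportVelocity U W p.1 p.2.re :=
    (contDiff_transportVelocity hU hW hU' hW').comp
      (by fun_prop : ContDiff ℝ ∞ fun p : ℝ × ℂ ↦ (p.1, p.2.re))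
  unfold transportHamiltonian
  fun_prop

theorem hasCompactSupport_transportHamiltonian {χ : ℂ → ℝ} (hχ : HasCompactSupport χ) :
    HasCompactSupport (transportHamiltonian χ U W) := by
  refine HasCompactSupport.intro (K := Icc 0 1 ×ˢ tsupport χ) (isCompact_Icc.prod hχ) ?_
  rintro ⟨t, z⟩ hp
  by_cases ht : t ∈ Icc (0 : ℝ) 1
  · simp [transportHamiltonian, image_eq_zero_of_notMem_tsupport fun hz ↦ hp ⟨ht, hz⟩]
  · simp [transportHamiltonian, transportVelocity,
      deriv_smoothTransition_eq_zero fun h ↦ ht (Ioo_subset_Icc_self h)]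

theorem differentiable_transportVelocity (hU : ContDiff ℝ ∞ U) (hW : ContDiff ℝ ∞ W)
    (hU' : ∀ x, 0 < deriv U x) (hW' : ∀ x, 0 < deriv W x) (t : ℝ) :
    Differentiable ℝ (transportVelocity U W t) :=
  ((contDiff_transportVelocity hU hW hU' hW').comp
    (contDiff_prodMk_right t : ContDiff ℝ ∞ fun x : ℝ ↦ (t, x))).differentiable (by simp)

theorem I_mul_gradient_neg_im_mul {h : ℝ → ℝ} {z : ℂ} (hh : DifferentiableAt ℝ h z.re) :
    Complex.I * gradient (fun w : ℂ ↦ -(w.im * h w.re)) z = ⟨h z.re, -(z.im * deriv h z.re)⟩ := by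
  have hfderiv : HasFDerivAt (fun w : ℂ ↦ -(w.im * h w.re))
      (-(z.im • deriv h z.re • Complex.reCLM + h z.re • Complex.imCLM)) z :=
    (Complex.imCLM.hasFDerivAt.mul
      (hh.hasDerivAt.comp_hasFDerivAt z Complex.reCLM.hasFDerivAt)).neg
  rw [gradient_eq_fderiv_one_fderiv_I, hfderiv.fderiv]
  apply Complex.ext <;> simp

theorem hamiltonianVectorField_transportHamiltonian (hU : ContDiff ℝ ∞ U) (hW : ContDiff ℝ ∞ W)
    (hU' : ∀ x, 0 < deriv U x) (hW' : ∀ x, 0 < deriv W x) {χ : ℂ → ℝ} {z : ℂ}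
    (hχ : χ =ᶠ[𝓝 z] 1) (t : ℝ) :
    hamiltonianVectorField (transportHamiltonian χ U W) t z =
      ⟨transportVelocity U W t z.re, -(z.im * deriv (transportVelocity U W t) z.re)⟩ := by
  have heq : (fun w ↦ transportHamiltonian χ U W (t, w)) =ᶠ[𝓝 z]
      fun w ↦ -(w.im * transportVelocity U W t w.re) := by
    filter_upwards [hχ] with w hw
    simp [transportHamiltonian, hw]
  rw [hamiltonianVectorField, heq.gradient_eq,
    I_mul_gradient_neg_im_mul (differentiable_transportVelocity hU hW hU' hW' t _)]

theorem transportVelocity_mul_smoothInterp (hU' : ∀ x, 0 < deriv U x) (hW' : ∀ x, 0 < deriv W x)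
    (t x : ℝ) :
    transportVelocity U W t x * smoothInterp (deriv U) (deriv W) t x =
      deriv smoothTransition t * (U x - W x) :=
  div_mul_cancel₀ _ (smoothInterp_deriv_pos hU' hW' t x).ne'

theorem deriv_transportVelocity_mul_smoothInterp_add (hU : ContDiff ℝ ∞ U) (hW : ContDiff ℝ ∞ W)
    (hU' : ∀ x, 0 < deriv U x) (hW' : ∀ x, 0 < deriv W x) (t x : ℝ) :
    deriv (transportVelocity U W t) x * smoothInterp (deriv U) (deriv W) t x +
        transportVelocity U W t x * smoothInterp (deriv (deriv U)) (deriv (deriv W)) t x =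
      deriv smoothTransition t * (deriv U x - deriv W x) := by
  obtain ⟨hUd, hU''⟩ := contDiff_infty_iff_deriv.1 hU
  obtain ⟨hWd, hW''⟩ := contDiff_infty_iff_deriv.1 hW
  have hprod := (differentiable_transportVelocity hU hW hU' hW' t x).hasDerivAt.mul
    (hasDerivAt_smoothInterp (t := t) (hU''.differentiable (by simp) x)
      (hW''.differentiable (by simp) x))
  exact hprod.unique <|
    (((hUd x).hasDerivAt.sub (hWd x).hasDerivAt).const_mul _).congr_of_eventuallyEq
      (Eventually.of_forall (transportVelocity_mul_smoothInterp hU' hW' t))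

theorem hasDerivWithinAt_areaCoords_smoothInterp (hU : ContDiff ℝ ∞ U) (hW : ContDiff ℝ ∞ W)
    (hU' : ∀ x, 0 < deriv U x) (hW' : ∀ x, 0 < deriv W x) {χ : ℂ → ℝ} {γ : ℝ → ℂ} {s : Set ℝ}
    {t : ℝ} (hχ : χ =ᶠ[𝓝 (γ t)] 1)
    (hγ : HasDerivWithinAt γ (hamiltonianVectorField (transportHamiltonian χ U W) t (γ t)) s t) :
    HasDerivWithinAt (fun τ ↦ areaCoords (smoothInterp U W τ) (γ τ)) 0 s t := by
  obtain ⟨hUd, hU''⟩ := contDiff_infty_iff_deriv.1 hU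
  obtain ⟨hWd, hW''⟩ := contDiff_infty_iff_deriv.1 hW
  rw [hamiltonianVectorField_transportHamiltonian hU hW hU' hW' hχ] at hγ
  have hre : HasDerivWithinAt (fun τ ↦ (γ τ).re) (transportVelocity U W t (γ t).re) s t :=
    Complex.reCLM.hasFDerivAt.comp_hasDerivWithinAt t hγ
  have him : HasDerivWithinAt (fun τ ↦ (γ τ).im)
      (-((γ t).im * deriv (transportVelocity U W t) (γ t).re)) s t :=
    Complex.imCLM.hasFDerivAt.comp_hasDerivWithinAt t hγ
  have hfst := (hasDerivWithinAt_smoothInterp_comp (hUd _) (hWd _) hre).congr_deriv (g' := 0) (by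
    linear_combination transportVelocity_mul_smoothInterp hU' hW' t (γ t).re)
  have hsnd := (him.div (hasDerivWithinAt_smoothInterp_comp (hU''.differentiable (by simp) _)
    (hW''.differentiable (by simp) _) hre)
    (smoothInterp_deriv_pos hU' hW' t _).ne').congr_deriv (g' := 0) (by
      rw [div_eq_zero_iff]
      exact .inl (by linear_combination -(γ t).im *
        deriv_transportVelocity_mul_smoothInterp_add hU hW hU' hW' t (γ t).re))
  simpa only [areaCoords, deriv_smoothInterp hUd hWd, Prod.mk_zero_zero] using! hfst.prodMk hsnd

theorem mem_symmetricBand_sup_of_areaCoords_eq (hU : Differentiable ℝ U)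
    (hW : Differentiable ℝ W) (hU' : ∀ x, 0 < deriv U x) (hW' : ∀ x, 0 < deriv W x) {a b t : ℝ}
    (ha : W a ≤ U a) (hb : U b ≤ W b) {z w : ℂ} (hz : z ∈ symmetricBand a b (deriv U))
    (hzw : areaCoords (smoothInterp U W t) w = areaCoords U z) :
    w ∈ symmetricBand a b (deriv U ⊔ deriv W) := by
  have hderiv := deriv_smoothInterp hU hW t
  rw [mem_symmetricBand_deriv_iff hU', ← hzw] at hz
  have hw : w ∈ symmetricBand a b (deriv (smoothInterp U W t)) := by
    rw [mem_symmetricBand_deriv_iff (hderiv ▸ smoothInterp_deriv_pos hU' hW' t)]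
    exact ⟨⟨(smoothInterp_mem (convex_Iic (U a)) self_mem_Iic ha t).trans hz.1.1,
      hz.1.2.trans (smoothInterp_mem (convex_Ici (U b)) self_mem_Ici hb t)⟩, hz.2⟩
  refine ⟨hw.1, hw.2.trans ?_⟩
  rw [hderiv]
  exact smoothInterp_mem (convex_Iic _) (mem_Iic.2 le_sup_left) (mem_Iic.2 le_sup_right) t

theorem areaCoords_eq_of_isIntegralCurveOn (hU : ContDiff ℝ ∞ U) (hW : ContDiff ℝ ∞ W)
    (hU' : ∀ x, 0 < deriv U x) (hW' : ∀ x, 0 < deriv W x) {a b : ℝ} (ha : W a ≤ U a)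
    (hb : U b ≤ W b) {χ : ℂ → ℝ}
    (hχ : ∀ᶠ z in 𝓝ˢ (symmetricBand a b (deriv U ⊔ deriv W)), χ z = 1) {γ : ℝ → ℂ}
    (hγ : IsIntegralCurveOn γ (hamiltonianVectorField (transportHamiltonian χ U W)) (Icc 0 1))
    (hγ₀ : γ 0 ∈ symmetricBand a b (deriv U)) :
    ∀ t ∈ Icc (0 : ℝ) 1, areaCoords (smoothInterp U W t) (γ t) = areaCoords U (γ 0) := by
  obtain ⟨hUd, hU''⟩ := contDiff_infty_iff_deriv.1 hU
  obtain ⟨hWd, hW''⟩ := contDiff_infty_iff_deriv.1 hW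
  have hcurve : ContinuousOn (fun t ↦ (t, (γ t).re)) (Icc 0 1) :=
    continuousOn_id.prodMk (Complex.continuous_re.comp_continuousOn hγ.continuousOn)
  have hcont : ContinuousOn (fun t ↦ areaCoords (smoothInterp U W t) (γ t)) (Icc 0 1) := by
    simp only [areaCoords, deriv_smoothInterp hUd hWd]
    exact ((contDiff_smoothInterp hU hW).continuous.comp_continuousOn hcurve).prodMk
      ((Complex.continuous_im.comp_continuousOn hγ.continuousOn).div
        ((contDiff_smoothInterp hU'' hW'').continuous.comp_continuousOn hcurve)
        fun t _ ↦ (smoothInterp_deriv_pos hU' hW' t _).ne')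
  have hstart : areaCoords (smoothInterp U W 0) (γ 0) = areaCoords U (γ 0) := by
    rw [smoothInterp_zero]
  rw [← hstart]
  refine eq_left_of_forall_eventually_hasDerivWithinAt_zero hcont fun t ht hft ↦ ?_
  have hmem : γ t ∈ symmetricBand a b (deriv U ⊔ deriv W) :=
    mem_symmetricBand_sup_of_areaCoords_eq hUd hWd hU' hW' ha hb hγ₀ (hft.trans hstart)
  have hχt := (eventually_nhdsSet_iff_forall.1 hχ _ hmem).eventually_nhds
  filter_upwards [(hγ.continuousOn t (Ico_subset_Icc_self ht)).eventually hχt, self_mem_nhdsWithin]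
    with s hχs hs
  exact hasDerivWithinAt_areaCoords_smoothInterp hU hW hU' hW' hχs (hγ s hs)

theorem exists_hamiltonian_transport (hU : ContDiff ℝ ∞ U) (hW : ContDiff ℝ ∞ W)
    (hU' : ∀ x, 0 < deriv U x) (hW' : ∀ x, 0 < deriv W x) {a b : ℝ} (ha : W a ≤ U a)
    (hb : U b ≤ W b) {V : Set ℂ} (hV : IsOpen V) (hVb : Bornology.IsBounded V)
    (hband : symmetricBand a b (deriv U ⊔ deriv W) ⊆ V) :
    ∃ F : ℝ × ℂ → ℝ, ContDiff ℝ ∞ F ∧ HasCompactSupport F ∧ (∀ t, ∀ z ∉ V, F (t, z) = 0) ∧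
      ∀ γ, IsIntegralCurveOn γ (hamiltonianVectorField F) (Icc 0 1) →
        γ 0 ∈ symmetricBand a b (deriv U) → W (γ 1).re = U (γ 0).re := by
  have hclosed : IsClosed (symmetricBand a b (deriv U ⊔ deriv W)) :=
    isClosed_symmetricBand ((contDiff_infty_iff_deriv.1 hU).2.continuous.sup
      (contDiff_infty_iff_deriv.1 hW).2.continuous)
  obtain ⟨χ, hχ, hχV, -⟩ := exists_contMDiffMap_one_nhds_of_subset_interior (n := ⊤) 𝓘(ℝ, ℂ)
    hclosed (hV.interior_eq.symm ▸ hband)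
  have hχc : HasCompactSupport χ :=
    HasCompactSupport.intro hVb.isCompact_closure fun z hz ↦ hχV z (notMem_subset subset_closure hz)
  refine ⟨transportHamiltonian χ U W,
    contDiff_transportHamiltonian χ.contMDiff.contDiff hU hW hU' hW',
    hasCompactSupport_transportHamiltonian hχc,
    fun t z hz ↦ by simp [transportHamiltonian, hχV z hz], fun γ hγ hγ₀ ↦ ?_⟩
  have hcoords := areaCoords_eq_of_isIntegralCurveOn hU hW hU' hW' ha hb hχ hγ hγ₀ 1 (by simp)
  rw [smoothInterp_one] at hcoords
  exact congrArg Prod.fst hcoords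

end Transport

section Disjunction

theorem contDiff_intervalIntegral {u : ℝ → ℝ} (hu : ContDiff ℝ ∞ u) (a : ℝ) :
    ContDiff ℝ ∞ fun x ↦ ∫ y in a..x, u y := by
  have hderiv (x : ℝ) : HasDerivAt (fun x ↦ ∫ y in a..x, u y) (u x) x :=
    (hu.continuous.integral_hasStrictDerivAt a x).hasDerivAt
  refine contDiff_infty_iff_deriv.2 ⟨fun x ↦ (hderiv x).differentiableAt, ?_⟩
  rwa [show deriv (fun x ↦ ∫ y in a..x, u y) = u from funext fun x ↦ (hderiv x).deriv]

theorem exists_isHamiltonianFlow_disjoint_symmetricBand_deriv {U V W : ℝ → ℝ}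
    (hU : ContDiff ℝ ∞ U) (hV : ContDiff ℝ ∞ V) (hW : ContDiff ℝ ∞ W)
    (hU' : ∀ x, 0 < deriv U x) (hV' : ∀ x, 0 < deriv V x) (hW' : ∀ x, 0 < deriv W x)
    {a b : ℝ} (hab : a ≤ b) (ha : W a ≤ U a) (hUV : U b < V a) (hb : V b ≤ W b)
    {O : Set ℂ} (hO : IsOpen O) (hOb : Bornology.IsBounded O)
    (hUO : symmetricBand a b (deriv U ⊔ deriv W) ⊆ O)
    (hVO : symmetricBand a b (deriv V ⊔ deriv W) ⊆ O) :
    ∃ (H : ℝ × ℂ → ℝ) (φ : ℝ → ℂ → ℂ), ContDiff ℝ ∞ H ∧ (∀ t, ∀ z ∉ O, H (t, z) = 0) ∧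
      IsHamiltonianFlow H φ ∧
      Disjoint (φ 1 '' symmetricBand a b (deriv U)) (symmetricBand a b (deriv V)) := by
  have hUmono : Monotone U := (strictMono_of_deriv_pos hU').monotone
  have hVmono : Monotone V := (strictMono_of_deriv_pos hV').monotone
  obtain ⟨F, hF, hFc, hFO, hFU⟩ := exists_hamiltonian_transport hU hW hU' hW' ha
    ((hUV.le.trans (hVmono hab)).trans hb) hO hOb hUO
  obtain ⟨G, hG, hGc, hGO, hGV⟩ := exists_hamiltonian_transport hV hW hV' hW'
    ((ha.trans (hUmono hab)).trans hUV.le) hb hO hOb hVO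
  obtain ⟨H, φ, hH, hHO, hφ, hcurves⟩ := exists_isHamiltonianFlow_concat_reverse hF hG hFc hGc
  refine ⟨H, φ, hH, fun t z hz ↦ hHO z (hFO · z hz) (hGO · z hz) t, hφ, disjoint_left.2 ?_⟩
  rintro _ ⟨z, hz, rfl⟩ hφz
  obtain ⟨γ, δ, hγ, hδ, rfl, hγδ, hδ₀⟩ := hcurves z
  rw [← hδ₀] at hφz
  refine hUV.not_ge ?_
  calc V a ≤ V (δ 0).re := hVmono hφz.1.1
    _ = W (δ 1).re := (hGV δ hδ hφz).symm
    _ = U (γ 0).re := by rw [← hγδ, hFU γ hγ hz]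
    _ ≤ U b := hUmono hz.1.2

theorem exists_isHamiltonianFlow_disjoint_symmetricBand {u v w : ℝ → ℝ} (hu : ContDiff ℝ ∞ u)
    (hv : ContDiff ℝ ∞ v) (hw : ContDiff ℝ ∞ w) (hu₀ : ∀ x, 0 < u x) (hv₀ : ∀ x, 0 < v x)
    (hw₀ : ∀ x, 0 < w x) {a b : ℝ} (hab : a ≤ b)
    (harea : (∫ x in a..b, u x) + ∫ x in a..b, v x < ∫ x in a..b, w x)
    {O : Set ℂ} (hO : IsOpen O) (hOb : Bornology.IsBounded O)
    (huO : symmetricBand a b (u ⊔ w) ⊆ O) (hvO : symmetricBand a b (v ⊔ w) ⊆ O) :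
    ∃ (H : ℝ × ℂ → ℝ) (φ : ℝ → ℂ → ℂ), ContDiff ℝ ∞ H ∧ (∀ t, ∀ z ∉ O, H (t, z) = 0) ∧
      IsHamiltonianFlow H φ ∧
      Disjoint (φ 1 '' symmetricBand a b u) (symmetricBand a b v) := by
  have hU' : deriv (fun x ↦ ∫ y in a..x, u y) = u :=
    funext (hu.continuous.deriv_integral u a)
  have hV' : deriv (fun x ↦ (∫ y in a..b, w y) + ∫ y in b..x, v y) = v :=
    funext fun x ↦ (deriv_const_add _).trans (hv.continuous.deriv_integral v b x)
  have hW' : deriv (fun x ↦ ∫ y in a..x, w y) = w :=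
    funext (hw.continuous.deriv_integral w a)
  have h := exists_isHamiltonianFlow_disjoint_symmetricBand_deriv
    (contDiff_intervalIntegral hu a)
    (contDiff_const.add (contDiff_intervalIntegral hv b) : ContDiff ℝ ∞ fun x ↦
      (∫ y in a..b, w y) + ∫ y in b..x, v y)
    (contDiff_intervalIntegral hw a) (hU'.symm ▸ hu₀) (hV'.symm ▸ hv₀) (hW'.symm ▸ hw₀) hab
    (by simp) (by rw [intervalIntegral.integral_symm a b]; linarith) (by simp) hO hOb
  rw [hU', hV', hW'] at h
  exact h huO hvO

end Disjunction

section Discs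

theorem exists_contDiff_forall_mem_Ioo {E : Type*} [NormedAddCommGroup E] [NormedSpace ℝ E]
    [FiniteDimensional ℝ E] {f g : E → ℝ} (hf : Continuous f) (hg : Continuous g)
    (hfg : ∀ x, f x < g x) : ∃ u : E → ℝ, ContDiff ℝ ∞ u ∧ ∀ x, u x ∈ Ioo (f x) (g x) := by
  obtain ⟨u, hu, hdist, -⟩ := ((hf.add hg).div_const 2).exists_contDiff_approx ⊤
    ((hg.sub hf).div_const 2) fun x ↦ half_pos (sub_pos.2 (hfg x))
  refine ⟨u, hu, fun x ↦ ?_⟩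
  have hx := abs_lt.1 (hdist x)
  simp only [Pi.add_apply, Pi.sub_apply] at hx
  constructor <;> linarith

theorem integral_sqrt_sq_sub_sq {r R : ℝ} (hr : 0 ≤ r) (hrR : r ≤ R) :
    ∫ x in -R..R, √(r ^ 2 - x ^ 2) = π * r ^ 2 / 2 := by
  have hinteg (a b : ℝ) :
      IntervalIntegrable (fun x ↦ √(r ^ 2 - x ^ 2)) MeasureTheory.volume a b :=
    (by fun_prop : Continuous fun x ↦ √(r ^ 2 - x ^ 2)).intervalIntegrable a b
  have hout (a b : ℝ) (h : ∀ x ∈ uIcc a b, r ≤ |x|) : ∫ x in a..b, √(r ^ 2 - x ^ 2) = 0 := by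
    refine intervalIntegral.integral_zero_ae (.of_forall fun x hx ↦ sqrt_eq_zero_of_nonpos ?_)
    rw [sub_nonpos, sq_le_sq, abs_of_nonneg hr]
    exact h x (uIoc_subset_uIcc hx)
  have hleft : ∫ x in -R..-r, √(r ^ 2 - x ^ 2) = 0 := hout _ _ fun x hx ↦ by
    rw [uIcc_of_le (neg_le_neg hrR)] at hx
    exact (le_neg.1 hx.2).trans (neg_le_abs x)
  have hright : ∫ x in r..R, √(r ^ 2 - x ^ 2) = 0 := hout _ _ fun x hx ↦ by
    rw [uIcc_of_le hrR] at hx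
    exact hx.1.trans (le_abs_self x)
  have hscale (x : ℝ) : √(r ^ 2 - (r * x) ^ 2) = r * √(1 - x ^ 2) := by
    rw [mul_pow, ← mul_one_sub, sqrt_mul (sq_nonneg r), sqrt_sq hr]
  have hmid : ∫ x in -r..r, √(r ^ 2 - x ^ 2) = π * r ^ 2 / 2 := by
    have h := intervalIntegral.smul_integral_comp_mul_left (a := -1) (b := 1)
      (fun x ↦ √(r ^ 2 - x ^ 2)) r
    simp only [hscale, intervalIntegral.integral_const_mul, integral_sqrt_one_sub_sq, smul_eq_mul,
      mul_neg, mul_one] at h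
    rw [← h]
    ring
  rw [← intervalIntegral.integral_add_adjacent_intervals (hinteg _ (-r)) (hinteg _ _),
    ← intervalIntegral.integral_add_adjacent_intervals (hinteg (-r) r) (hinteg _ _), hleft, hmid,
    hright, zero_add, add_zero]

theorem exists_contDiff_halfChord_lt {r R η : ℝ} (hr : 0 ≤ r) (hrR : r ≤ R) (hη : 0 < η) :
    ∃ u : ℝ → ℝ, ContDiff ℝ ∞ u ∧
      (∀ x, u x ∈ Ioo √(r ^ 2 - x ^ 2) (√(r ^ 2 - x ^ 2) + η)) ∧
      ∫ x in -R..R, u x ∈ Icc (π * r ^ 2 / 2) (π * r ^ 2 / 2 + 2 * R * η) := by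
  have hchord : Continuous fun x ↦ √(r ^ 2 - x ^ 2) := by fun_prop
  obtain ⟨u, hu, hbetween⟩ := exists_contDiff_forall_mem_Ioo hchord (hchord.add_const η)
    fun x ↦ lt_add_of_pos_right _ hη
  have hRR : -R ≤ R := neg_le_self (hr.trans hrR)
  refine ⟨u, hu, hbetween, ?_, ?_⟩
  · rw [← integral_sqrt_sq_sub_sq hr hrR]
    exact intervalIntegral.integral_mono_on hRR (hchord.intervalIntegrable _ _)
      (hu.continuous.intervalIntegrable _ _) fun x _ ↦ (hbetween x).1.le
  · calc ∫ x in -R..R, u x ≤ ∫ x in -R..R, (√(r ^ 2 - x ^ 2) + η) :=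
        intervalIntegral.integral_mono_on hRR (hu.continuous.intervalIntegrable _ _)
          ((hchord.add_const η).intervalIntegrable _ _) fun x _ ↦ (hbetween x).2.le
      _ = π * r ^ 2 / 2 + 2 * R * η := by
        rw [intervalIntegral.integral_add (hchord.intervalIntegrable _ _)
          intervalIntegrable_const, integral_sqrt_sq_sub_sq hr hrR,
          intervalIntegral.integral_const, smul_eq_mul]
        ring

theorem closedBall_subset_symmetricBand {r R : ℝ} (hrR : r ≤ R) {f : ℝ → ℝ}
    (hf : ∀ x, √(r ^ 2 - x ^ 2) ≤ f x) : Metric.closedBall 0 r ⊆ symmetricBand (-R) R f := by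
  intro z hz
  rw [mem_closedBall_zero_iff] at hz
  have him : z.im ^ 2 ≤ r ^ 2 - z.re ^ 2 := by
    rw [← Complex.sq_norm_sub_sq_re]
    gcongr
  exact ⟨abs_le.1 ((Complex.abs_re_le_norm z).trans (hz.trans hrR)),
    (abs_le_sqrt him).trans (hf z.re)⟩

theorem symmetricBand_subset_ball {R η : ℝ} (hR : 0 ≤ R) (hη : 0 ≤ η) {f : ℝ → ℝ}
    (hf : ∀ x, f x < √(R ^ 2 - x ^ 2) + η) :
    symmetricBand (-R) R f ⊆ Metric.ball 0 (R + η) := by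
  rintro z ⟨hre, him⟩
  have hre_sq : z.re ^ 2 ≤ R ^ 2 := sq_le_sq' hre.1 hre.2
  have hchord_sq : √(R ^ 2 - z.re ^ 2) ^ 2 = R ^ 2 - z.re ^ 2 := sq_sqrt (sub_nonneg.2 hre_sq)
  have hchord_le : √(R ^ 2 - z.re ^ 2) ≤ R :=
    sqrt_le_iff.2 ⟨hR, sub_le_self _ (sq_nonneg _)⟩
  have him_sq : z.im ^ 2 < (√(R ^ 2 - z.re ^ 2) + η) ^ 2 :=
    sq_lt_sq.2 ((him.trans_lt (hf z.re)).trans_le (le_abs_self _))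
  rw [mem_ball_zero_iff]
  refine lt_of_pow_lt_pow_left₀ 2 (add_nonneg hR hη) ?_
  calc ‖z‖ ^ 2 = z.re ^ 2 + z.im ^ 2 := by rw [← Complex.sq_norm_sub_sq_re, add_sub_cancel]
    _ < z.re ^ 2 + (√(R ^ 2 - z.re ^ 2) + η) ^ 2 := by gcongr
    _ = R ^ 2 + 2 * √(R ^ 2 - z.re ^ 2) * η + η ^ 2 := by rw [add_sq, hchord_sq]; ring
    _ ≤ R ^ 2 + 2 * R * η + η ^ 2 := by gcongr
    _ = (R + η) ^ 2 := (add_sq R η).symm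

theorem symmetricBand_sup_subset_ball {r R η : ℝ} (hr : 0 ≤ r) (hrR : r ≤ R) (hη : 0 ≤ η)
    {f g : ℝ → ℝ} (hf : ∀ x, f x < √(r ^ 2 - x ^ 2) + η)
    (hg : ∀ x, g x < √(R ^ 2 - x ^ 2) + η) :
    symmetricBand (-R) R (f ⊔ g) ⊆ Metric.ball 0 (R + η) :=
  symmetricBand_subset_ball (hr.trans hrR) hη fun x ↦
    max_lt ((hf x).trans_le (by gcongr)) (hg x)

theorem exists_isHamiltonianFlow_disjoint_closedBall {r s ρ : ℝ} (hr : 0 ≤ r) (hs : 0 ≤ s)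
    (hρ : 0 ≤ ρ) (hrs : r ^ 2 + s ^ 2 < ρ ^ 2) :
    ∃ (H : ℝ × ℂ → ℝ) (φ : ℝ → ℂ → ℂ), ContDiff ℝ ∞ H ∧
      (∀ t, ∀ z ∉ Metric.ball 0 ρ, H (t, z) = 0) ∧ IsHamiltonianFlow H φ ∧
      Disjoint (φ 1 '' Metric.closedBall 0 r) (Metric.closedBall 0 s) := by
  obtain ⟨R, hsqrt, hRρ⟩ := exists_between ((sqrt_lt (by positivity) hρ).2 hrs)
  have hR : 0 ≤ R := (sqrt_nonneg _).trans hsqrt.le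
  have hrsR : r ^ 2 + s ^ 2 < R ^ 2 := lt_sq_of_sqrt_lt hsqrt
  have hrR : r ≤ R := (sq_le_sq₀ hr hR).1 (by linarith [sq_nonneg s])
  have hsR : s ≤ R := (sq_le_sq₀ hs hR).1 (by linarith [sq_nonneg r])
  obtain ⟨η, hη, hηρ, hηarea⟩ : ∃ η > 0, R + η ≤ ρ ∧
      4 * R * η < π * (R ^ 2 - (r ^ 2 + s ^ 2)) / 2 := by
    have hgap : 0 < π * (R ^ 2 - (r ^ 2 + s ^ 2)) / 2 := by
      have := sub_pos.2 hrsR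
      positivity
    obtain ⟨c, hc, hcarea⟩ := exists_pos_mul_lt hgap (4 * R)
    refine ⟨min c (ρ - R), lt_min hc (sub_pos.2 hRρ), ?_, lt_of_le_of_lt ?_ hcarea⟩
    · linarith [min_le_right c (ρ - R)]
    · gcongr
      exact min_le_left _ _
  obtain ⟨u, hu, hur, huarea⟩ := exists_contDiff_halfChord_lt hr hrR hη
  obtain ⟨v, hv, hvs, hvarea⟩ := exists_contDiff_halfChord_lt hs hsR hη
  obtain ⟨w, hw, hwR, hwarea⟩ := exists_contDiff_halfChord_lt hR le_rfl hη
  have hpos {q : ℝ} {f : ℝ → ℝ} (hf : ∀ x, f x ∈ Ioo √(q ^ 2 - x ^ 2) (√(q ^ 2 - x ^ 2) + η))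
      (x : ℝ) : 0 < f x := (sqrt_nonneg _).trans_lt (hf x).1
  obtain ⟨H, φ, hH, hHρ, hφ, hdisj⟩ := exists_isHamiltonianFlow_disjoint_symmetricBand hu hv hw
    (hpos hur) (hpos hvs) (hpos hwR) (neg_le_self hR)
    (by linarith [huarea.2, hvarea.2, hwarea.1]) Metric.isOpen_ball Metric.isBounded_ball
    (symmetricBand_sup_subset_ball hr hrR hη.le (hur · |>.2) (hwR · |>.2))
    (symmetricBand_sup_subset_ball hs hsR hη.le (hvs · |>.2) (hwR · |>.2))
  exact ⟨H, φ, hH, fun t z hz ↦ hHρ t z (notMem_subset (Metric.ball_subset_ball hηρ) hz), hφ,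
    hdisj.mono (image_mono (closedBall_subset_symmetricBand hrR fun x ↦ (hur x).1.le))
      (closedBall_subset_symmetricBand hsR fun x ↦ (hvs x).1.le)⟩

end Discs

/-- a disc of area `A₁` can be disjoined from a disc of area `A₂` by a Hamiltonian
isotopy supported inside any disc of area greater than `A₁ + A₂`: there are a smooth
time-dependent Hamiltonian `F : ℝ × ℂ → ℝ` vanishing on `{π|z|² ≥ A₁ + A₂ + ε}` and a
Hamiltonian flow `b` of `F` whose time-one map moves `{π|z|² ≤ A₁}` off `{π|z|² ≤ A₂}`. -/
theorem stmt_5 (A₁ A₂ ε : ℝ) (hA₁ : 0 ≤ A₁) (hA₂ : 0 ≤ A₂) (hε : 0 < ε) :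
    ∃ (F : ℝ × ℂ → ℝ) (b : ℝ → ℂ → ℂ),
      ContDiff ℝ (⊤ : ℕ∞) F ∧
      (∀ (t : ℝ) (z : ℂ), A₁ + A₂ + ε ≤ π * ‖z‖ ^ 2 → F (t, z) = 0) ∧
      b 0 = id ∧
      (∀ (z : ℂ) (t : ℝ),
        HasDerivAt (fun s => b s z) (Complex.I * gradient (fun w => F (t, w)) (b t z)) t) ∧
      Disjoint (b 1 '' {z : ℂ | π * ‖z‖ ^ 2 ≤ A₁}) {z : ℂ | π * ‖z‖ ^ 2 ≤ A₂} := by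
  have hdisc (A : ℝ) : {z : ℂ | π * ‖z‖ ^ 2 ≤ A} ⊆ Metric.closedBall 0 √(A / π) := fun z hz ↦
    mem_closedBall_zero_iff.2 (le_sqrt_of_sq_le ((le_div_iff₀' pi_pos).2 hz))
  obtain ⟨F, b, hF, hFρ, hb, hdisj⟩ := exists_isHamiltonianFlow_disjoint_closedBall
    (sqrt_nonneg (A₁ / π)) (sqrt_nonneg (A₂ / π)) (sqrt_nonneg ((A₁ + A₂ + ε) / π)) (by
      rw [sq_sqrt (by positivity), sq_sqrt (by positivity), sq_sqrt (by positivity), ← add_div,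
        div_lt_div_iff_of_pos_right pi_pos]
      exact lt_add_of_pos_right _ hε)
  refine ⟨F, b, hF, fun t z hz ↦ hFρ t z fun hball ↦ ?_, hb.map_zero, hb.isIntegralCurve,
    hdisj.mono (image_mono (hdisc A₁)) (hdisc A₂)⟩
  rw [mem_ball_zero_iff, lt_sqrt (norm_nonneg z), lt_div_iff₀' pi_pos] at hball
  exact hball.not_ge hz
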